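/- arXiv:2203.05487 — 3 statements merged into one kernel-verified Lean document; each statement's English description precedes it below -/
import Mathlib

section
/- Let G be the graph obtained as follows: take pairwise disjoint copies K_1, K_2, K_3, ... of the graph K (with the vertices of K_i written x_i, y_i, z_i, z'_i, t_i, t'_i, w_i), identify y_i with x_{i+1} for every i ≥ 1, and add one further vertex 0 joined to x_i and to y_i for every i. Then G is cop-win, but G is not constructible. -/
universe u

/-- `y` dominates `x` in `G`: `y ≠ x` and the closed neighbourhood of `x` is contained
in the closed neighbourhood of `y`. -/
def Dominates {V : Type u} (G : SimpleGraph V) (y x : V) : Prop :=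
  y ≠ x ∧ ∀ z : V, (z = x ∨ G.Adj x z) → (z = y ∨ G.Adj y z)

/-- `y` dominates `x` in the subgraph of `G` induced by `S`. -/
def DominatesOn {V : Type u} (G : SimpleGraph V) (S : Set V) (y x : V) : Prop :=
  y ≠ x ∧ ∀ z ∈ S, (z = x ∨ G.Adj x z) → (z = y ∨ G.Adj y z)

/-- `r` (a well-order on `V`) is a construction order for `G`: every non-root vertex `x`
(i.e. one with a strictly earlier vertex) is dominated, in the subgraph induced by the
vertices up to and including `x`, by some strictly earlier vertex. -/
def ConstructionOrderSpec {V : Type u} (G : SimpleGraph V) (r : V → V → Prop) : Prop :=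
  ∀ x : V, (∃ y, r y x) → ∃ y, r y x ∧ DominatesOn G {z | r z x ∨ z = x} y x

/-- A graph is constructible if it has a construction order. -/
def Constructible {V : Type u} (G : SimpleGraph V) : Prop :=
  ∃ r : V → V → Prop, IsWellOrder V r ∧ ConstructionOrderSpec G r

/-- Given a cop strategy `σ` (a function of the robber's history of positions) and a robber
position sequence `r`, the cop's position at time `n`: the cop has seen the robber's first
`n` positions when making his `n`-th move. `copPos σ r 0 = σ []` is the cop's start. -/
def copPos {V : Type u} (σ : List V → V) (r : ℕ → V) (n : ℕ) : V :=
  σ (List.ofFn fun i : Fin n => r i.val)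

/-- A cop strategy is legal if each successive position is equal or adjacent to the previous one. -/
def LegalCop {V : Type u} (G : SimpleGraph V) (σ : List V → V) : Prop :=
  ∀ l : List V, l ≠ [] → σ l = σ l.dropLast ∨ G.Adj (σ l.dropLast) (σ l)

/-- A legal robber position sequence: each move is to an adjacent vertex or staying put. -/
def LegalRun {V : Type u} (G : SimpleGraph V) (r : ℕ → V) : Prop :=
  ∀ n : ℕ, r (n + 1) = r n ∨ G.Adj (r n) (r (n + 1))

/-- The cop catches the robber: at some time their positions coincide (either just after the
robber's move, or just after the cop's move). -/
def Caught {V : Type u} (σ : List V → V) (r : ℕ → V) : Prop :=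
  ∃ n : ℕ, copPos σ r n = r n ∨ copPos σ r (n + 1) = r n

/-- `G` is cop-win: the cop has a legal strategy catching every legal robber play. -/
def CopWin {V : Type u} (G : SimpleGraph V) : Prop :=
  ∃ σ : List V → V, LegalCop G σ ∧ ∀ r : ℕ → V, LegalRun G r → Caught σ r

/-- `G` is a weak cop win: the cop has a legal strategy guaranteeing that in every legal robber
play, either the robber is caught or the robber occupies each vertex at only finitely many times. -/
def WeakCopWin {V : Type u} (G : SimpleGraph V) : Prop :=
  ∃ σ : List V → V, LegalCop G σ ∧
    ∀ r : ℕ → V, LegalRun G r → Caught σ r ∨ ∀ v : V, {n : ℕ | r n = v}.Finite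

/-- Vertices of the chain graph: `O` is the extra vertex `0`; for each `i : ℕ`, the `(i+1)`-st
copy `K_{i+1}` of `K` has `x = X i`, `y = X (i+1)` (so that `y_i` is identified with `x_{i+1}`),
and the remaining vertices `Z i, Z' i, T i, T' i, W i`. -/
inductive ChainVert : Type
  | O | X (i : ℕ) | Z (i : ℕ) | Z' (i : ℕ) | T (i : ℕ) | T' (i : ℕ) | W (i : ℕ)

open ChainVert in
/-- The edges: the `K`-edges within each copy, together with `0` joined to every `x_i` and `y_i`. -/
def ChainRel : ChainVert → ChainVert → Prop := fun a b =>
  (∃ i : ℕ,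
    (a = X i ∧ b = X (i + 1)) ∨ (a = X i ∧ b = T i) ∨ (a = X i ∧ b = T' i) ∨
    (a = X (i + 1) ∧ b = Z i) ∨ (a = X (i + 1) ∧ b = Z' i) ∨
    (a = X (i + 1) ∧ b = T i) ∨ (a = X (i + 1) ∧ b = T' i) ∨
    (a = Z i ∧ b = Z' i) ∨ (a = Z i ∧ b = T i) ∨ (a = Z i ∧ b = W i) ∨
    (a = Z' i ∧ b = T' i) ∨ (a = Z' i ∧ b = W i) ∨
    (a = T i ∧ b = W i) ∨ (a = T' i ∧ b = W i)) ∨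
  (∃ i : ℕ, a = O ∧ b = X i)

/-- The graph of Theorem 3: a one-way infinite chain of copies of `K` (with `y_i = x_{i+1}`),
together with a vertex `0` joined to all the `x_i` and `y_i`. -/
def ChainGraph : SimpleGraph ChainVert := SimpleGraph.fromRel ChainRel

/-!
Non-constructibility: the last vertex of a finite set `S` in a construction order is dominated
in `G[S]`. Inside the copy `K_i` only `x_i` is dominated, so `x_i` comes after `y_i = x_{i+1}`,
and the `x_i` would form an infinite descending sequence.

The cop wins starting at `0`. The robber must avoid every `x_i`, so he is in the interior of some
copy `K_i`, and the cop's move to `y_i` forces him to `w_i`. Then the cop goes to `z_i`, forcing the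
robber to `t'_i`, to `z'_i`, forcing him to `x_i`, and back to `y_i`, forcing him into an earlier
copy. When the cop now returns to `0`, the robber ends up inside some `K_k` with `k < i`.
-/

section Game

variable {V : Type u} {G : SimpleGraph V} {c c' r : V}

/-- `b` lies in the closed neighbourhood of `a`, i.e. a player may move from `a` to `b`. -/
def ClosedAdj (G : SimpleGraph V) (a b : V) : Prop :=
  b = a ∨ G.Adj a b

theorem ClosedAdj.symm {a b : V} (h : ClosedAdj G a b) : ClosedAdj G b a :=
  h.imp Eq.symm SimpleGraph.Adj.symm

/-- With the cop at `c`, the robber at `r` and the cop to move, the cop has a winning strategy.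
The robber's start at `r` is the first entry of the history that the strategy sees. -/
def CopWinsFrom (G : SimpleGraph V) (c r : V) : Prop :=
  ∃ σ : List V → V, LegalCop G σ ∧ σ [] = c ∧ ∀ R : ℕ → V, LegalRun G R → R 0 = r → Caught σ R

/-- The cop strategy that starts at `c`, ignores the first robber position and from then on
plays `σ`, whose start is thus the target of the cop's first move. -/
def delayedStrategy (c : V) (σ : List V → V) : List V → V
  | [] => c
  | _ :: l => σ l

/-- The cop strategy that starts at `c` and plays `τ r` when the robber starts at `r`. -/
def branchingStrategy (c : V) (τ : V → List V → V) : List V → V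
  | [] => c
  | r :: l => τ r (r :: l)

theorem legalCop_const (c : V) : LegalCop G fun _ => c :=
  fun _ _ => Or.inl rfl

theorem LegalCop.delayedStrategy {σ : List V → V} (hσ : LegalCop G σ)
    (hc : ClosedAdj G c (σ [])) : LegalCop G (delayedStrategy c σ)
  | [], hnil => absurd rfl hnil
  | [_], _ => hc
  | _ :: a :: l, _ => hσ (a :: l) (List.cons_ne_nil a l)

theorem LegalCop.branchingStrategy {τ : V → List V → V} (hτ : ∀ r, LegalCop G (τ r))
    (hstart : ∀ r, τ r [] = c) : LegalCop G (branchingStrategy c τ)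
  | [], hnil => absurd rfl hnil
  | [r], _ => hstart r ▸ hτ r [r] (List.cons_ne_nil r [])
  | r :: a :: l, _ => hτ r (r :: a :: l) (List.cons_ne_nil r (a :: l))

theorem LegalRun.tail {R : ℕ → V} (hR : LegalRun G R) : LegalRun G fun n => R (n + 1) :=
  fun n => hR (n + 1)

theorem copPos_delayedStrategy_succ (c : V) (σ : List V → V) (R : ℕ → V) (n : ℕ) :
    copPos (delayedStrategy c σ) R (n + 1) = copPos σ (fun k => R (k + 1)) n := by
  simp only [copPos, List.ofFn_succ, delayedStrategy, Fin.val_succ]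

theorem copPos_branchingStrategy {τ : V → List V → V} (hstart : ∀ r, τ r [] = c) (R : ℕ → V) :
    copPos (branchingStrategy c τ) R = copPos (τ (R 0)) R := by
  funext n
  cases n with
  | zero => exact (hstart (R 0)).symm
  | succ n => simp only [copPos, List.ofFn_succ, branchingStrategy, Fin.val_zero]

theorem Caught.delayedStrategy {σ : List V → V} {R : ℕ → V}
    (h : Caught σ fun n => R (n + 1)) (c : V) : Caught (delayedStrategy c σ) R := by
  obtain ⟨n, hn⟩ := h
  exact ⟨n + 1, by simpa only [copPos_delayedStrategy_succ] using hn⟩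

theorem exists_legalCop_of_forall_copWinsFrom {S : Set V} (h : ∀ r ∈ S, CopWinsFrom G c r) :
    ∃ σ : List V → V, LegalCop G σ ∧ σ [] = c ∧
      ∀ R : ℕ → V, LegalRun G R → R 0 ∈ S → Caught σ R := by
  have hstrategy : ∀ r, ∃ σ : List V → V, LegalCop G σ ∧ σ [] = c ∧
      (r ∈ S → ∀ R : ℕ → V, LegalRun G R → R 0 = r → Caught σ R) := by
    intro r
    by_cases hr : r ∈ S
    · obtain ⟨σ, hlegal, hstart, hcatch⟩ := h r hr
      exact ⟨σ, hlegal, hstart, fun _ => hcatch⟩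
    · exact ⟨fun _ => c, legalCop_const c, rfl, fun hr' => absurd hr' hr⟩
  choose τ hlegal hstart hcatch using hstrategy
  refine ⟨branchingStrategy c τ, .branchingStrategy hlegal hstart, rfl, fun R hR hR₀ => ?_⟩
  simpa only [Caught, copPos_branchingStrategy hstart] using hcatch (R 0) hR₀ R hR rfl

theorem CopWinsFrom.of_closedAdj (h : ClosedAdj G c r) : CopWinsFrom G c r :=
  ⟨delayedStrategy c fun _ => r, (legalCop_const r).delayedStrategy h, rfl,
    fun R _ hR₀ => ⟨0, Or.inr ((copPos_delayedStrategy_succ c _ R 0).trans hR₀.symm)⟩⟩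

theorem CopWinsFrom.of_move (hc : ClosedAdj G c c')
    (h : ∀ r', ClosedAdj G r r' → ¬ ClosedAdj G c' r' → CopWinsFrom G c' r') :
    CopWinsFrom G c r := by
  have hwin : ∀ r' ∈ {r' | ClosedAdj G r r'}, CopWinsFrom G c' r' := fun r' hr' => by
    by_cases hnear : ClosedAdj G c' r'
    · exact .of_closedAdj hnear
    · exact h r' hr' hnear
  obtain ⟨σ, hlegal, rfl, hcatch⟩ := exists_legalCop_of_forall_copWinsFrom hwin
  refine ⟨delayedStrategy c σ, hlegal.delayedStrategy hc, rfl, fun R hR hR₀ => ?_⟩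
  exact (hcatch _ hR.tail (hR₀ ▸ hR 0)).delayedStrategy c

theorem copWin_of_forall_copWinsFrom (h : ∀ r, CopWinsFrom G c r) : CopWin G := by
  obtain ⟨σ, hlegal, -, hcatch⟩ :=
    exists_legalCop_of_forall_copWinsFrom (S := Set.univ) fun r _ => h r
  exact ⟨σ, hlegal, fun R hR => hcatch R hR (Set.mem_univ _)⟩

end Game

section Constructible

variable {V : Type u} {G : SimpleGraph V}

theorem DominatesOn.mono {S T : Set V} {x y : V} (hST : S ⊆ T) (h : DominatesOn G T y x) :
    DominatesOn G S y x :=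
  ⟨h.1, fun z hz => h.2 z (hST hz)⟩

theorem DominatesOn.closedAdj {S : Set V} {x y z : V} (h : DominatesOn G S y x) (hz : z ∈ S)
    (hxz : ClosedAdj G x z) : ClosedAdj G z y :=
  ClosedAdj.symm (h.2 z hz hxz)

theorem exists_last_of_finite (r : V → V → Prop) [IsStrictTotalOrder V r] {S : Set V}
    (hfin : S.Finite) (hne : S.Nonempty) : ∃ v ∈ S, ∀ u ∈ S, r u v ∨ u = v := by
  classical
  let := linearOrderOfSTO r
  obtain ⟨v, hv, hlast⟩ := S.exists_max_image id hfin hne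
  exact ⟨v, hv, fun u hu => (hlast u hu).lt_or_eq⟩

theorem ConstructionOrderSpec.exists_last_dominatesOn {r : V → V → Prop}
    [IsStrictTotalOrder V r] (h : ConstructionOrderSpec G r) {S : Set V} (hfin : S.Finite)
    (hS : S.Nontrivial) :
    ∃ v ∈ S, (∀ u ∈ S, r u v ∨ u = v) ∧ ∃ y, DominatesOn G S y v := by
  obtain ⟨v, hv, hlast⟩ := exists_last_of_finite r hfin hS.nonempty
  obtain ⟨u, hu, huv⟩ := hS.exists_ne v
  obtain ⟨y, -, hy⟩ := h v ⟨u, (hlast u hu).resolve_right huv⟩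
  exact ⟨v, hv, hlast, y, hy.mono hlast⟩

theorem not_constructible_of_unique_dominated {ι : Type*} [Nonempty ι] (x : ι → V)
    (S : ι → Set V) (hfin : ∀ i, (S i).Finite) (hx : ∀ i, x i ∈ S i)
    (hnext : ∀ i, ∃ j, x j ∈ S i ∧ x j ≠ x i)
    (huniq : ∀ i, ∀ v ∈ S i, ∀ y, DominatesOn G (S i) y v → v = x i) :
    ¬ Constructible G := by
  rintro ⟨r, hr, hspec⟩
  obtain ⟨_, ⟨i, rfl⟩, hmin⟩ := hr.wf.has_min (Set.range x) (Set.range_nonempty x)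
  obtain ⟨j, hj, hji⟩ := hnext i
  obtain ⟨v, hv, hlast, y, hy⟩ :=
    hspec.exists_last_dominatesOn (hfin i) ⟨x j, hj, x i, hx i, hji⟩
  obtain rfl : v = x i := huniq i v hv y hy
  exact hmin (x j) (Set.mem_range_self j) ((hlast (x j) hj).resolve_right hji)

end Constructible

namespace ChainGraph

open ChainVert

variable {i : ℕ} {c r r' v y : ChainVert}

/-- The vertices of the copy of `K` between `X i` and `X (i + 1)` that lie in no other copy. -/
def copyInterior (i : ℕ) : Set ChainVert :=
  {Z i, Z' i, T i, T' i, W i}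

/-- The vertex set of the copy of `K` with `x = X i` and `y = X (i + 1)`. -/
def copy (i : ℕ) : Set ChainVert :=
  insert (X i) (insert (X (i + 1)) (copyInterior i))

@[simp]
theorem closedAdj_O_iff : ClosedAdj ChainGraph O v ↔ v = O ∨ ∃ i, v = X i := by
  grind [ClosedAdj, ChainGraph, ChainRel, SimpleGraph.fromRel_adj]

@[simp]
theorem closedAdj_X_iff :
    ClosedAdj ChainGraph (X i) v ↔ v = X i ∨ v = O ∨ v = X (i + 1) ∨ v = T i ∨ v = T' i ∨
      ∃ j, i = j + 1 ∧ (v = X j ∨ v = Z j ∨ v = Z' j ∨ v = T j ∨ v = T' j) := by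
  grind [ClosedAdj, ChainGraph, ChainRel, SimpleGraph.fromRel_adj]

@[simp]
theorem closedAdj_Z_iff :
    ClosedAdj ChainGraph (Z i) v ↔ v = Z i ∨ v = X (i + 1) ∨ v = Z' i ∨ v = T i ∨ v = W i := by
  grind [ClosedAdj, ChainGraph, ChainRel, SimpleGraph.fromRel_adj]

@[simp]
theorem closedAdj_Z'_iff :
    ClosedAdj ChainGraph (Z' i) v ↔ v = Z' i ∨ v = X (i + 1) ∨ v = Z i ∨ v = T' i ∨ v = W i := by
  grind [ClosedAdj, ChainGraph, ChainRel, SimpleGraph.fromRel_adj]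

@[simp]
theorem closedAdj_T_iff :
    ClosedAdj ChainGraph (T i) v ↔ v = T i ∨ v = X i ∨ v = X (i + 1) ∨ v = Z i ∨ v = W i := by
  grind [ClosedAdj, ChainGraph, ChainRel, SimpleGraph.fromRel_adj]

@[simp]
theorem closedAdj_T'_iff :
    ClosedAdj ChainGraph (T' i) v ↔ v = T' i ∨ v = X i ∨ v = X (i + 1) ∨ v = Z' i ∨ v = W i := by
  grind [ClosedAdj, ChainGraph, ChainRel, SimpleGraph.fromRel_adj]

@[simp]
theorem closedAdj_W_iff :
    ClosedAdj ChainGraph (W i) v ↔ v = W i ∨ v = Z i ∨ v = Z' i ∨ v = T i ∨ v = T' i := by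
  grind [ClosedAdj, ChainGraph, ChainRel, SimpleGraph.fromRel_adj]

theorem finite_copy (i : ℕ) : (copy i).Finite := by
  simp [copy, copyInterior]

theorem closedAdj_O_or_mem_copyInterior (v : ChainVert) :
    ClosedAdj ChainGraph O v ∨ ∃ i, v ∈ copyInterior i := by
  cases v <;> simp [copyInterior]

theorem eq_X_of_dominatesOn_copy (hv : v ∈ copy i) (h : DominatesOn ChainGraph (copy i) y v) :
    v = X i := by
  have hcommon : ∀ z ∈ copy i, ClosedAdj ChainGraph v z → ClosedAdj ChainGraph z y :=
    fun _ => h.closedAdj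
  have hne : y ≠ v := h.1
  simp only [copy, copyInterior, Set.mem_insert_iff, Set.mem_singleton_iff, forall_eq_or_imp,
    forall_eq] at hcommon
  rcases hv with rfl | rfl | rfl | rfl | rfl | rfl | rfl
  · rfl
  -- The closed neighbourhoods of all `z ∈ N[v] ∩ K_i` have only `v` in common.
  all_goals
    grind [closedAdj_X_iff, closedAdj_Z_iff, closedAdj_Z'_iff, closedAdj_T_iff, closedAdj_T'_iff,
      closedAdj_W_iff]

theorem not_constructible : ¬ Constructible ChainGraph :=
  not_constructible_of_unique_dominated X copy finite_copy
    (fun _ => Set.mem_insert _ _)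
    (fun i => ⟨i + 1, by simp [copy], by simp⟩)
    fun _ _ hv _ => eq_X_of_dominatesOn_copy hv

theorem eq_W_of_mem_copyInterior_of_closedAdj (hr : r ∈ copyInterior i)
    (hmove : ClosedAdj ChainGraph r r') (hfar : ¬ ClosedAdj ChainGraph (X (i + 1)) r') :
    r' = W i := by
  rcases hr with rfl | rfl | rfl | rfl | rfl <;>
    grind [closedAdj_X_iff, closedAdj_Z_iff, closedAdj_Z'_iff, closedAdj_T_iff, closedAdj_T'_iff,
      closedAdj_W_iff]

theorem copWinsFrom_of_mem_copyInterior (hW : CopWinsFrom ChainGraph (X (i + 1)) (W i))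
    (hr : r ∈ copyInterior i) (hc : ClosedAdj ChainGraph c (X (i + 1))) :
    CopWinsFrom ChainGraph c r :=
  .of_move hc fun r' hmove hfar => by
    rwa [eq_W_of_mem_copyInterior_of_closedAdj hr hmove hfar]

theorem copWinsFrom_Z_T'_of_Z'_X (hX : CopWinsFrom ChainGraph (Z' i) (X i)) :
    CopWinsFrom ChainGraph (Z i) (T' i) := by
  refine .of_move (c' := Z' i) (by simp) fun r hmove hfar => ?_
  obtain rfl : r = X i := by
    rw [closedAdj_T'_iff] at hmove
    rw [closedAdj_Z'_iff] at hfar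
    tauto
  exact hX

theorem copWinsFrom_X_succ_W_of_Z'_X (hX : CopWinsFrom ChainGraph (Z' i) (X i)) :
    CopWinsFrom ChainGraph (X (i + 1)) (W i) := by
  refine .of_move (c' := Z i) (by simp) fun r hmove hfar => ?_
  obtain rfl : r = T' i := by
    rw [closedAdj_W_iff] at hmove
    rw [closedAdj_Z_iff] at hfar
    tauto
  exact copWinsFrom_Z_T'_of_Z'_X hX

theorem exists_lt_mem_insert_X_copyInterior (hmove : ClosedAdj ChainGraph (X i) r)
    (hfar : ¬ ClosedAdj ChainGraph (X (i + 1)) r) :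
    ∃ j < i, r ∈ insert (X j) (copyInterior j) := by
  simp only [closedAdj_X_iff] at hmove hfar
  obtain ⟨j, rfl, hr⟩ :
      ∃ j, i = j + 1 ∧ (r = X j ∨ r = Z j ∨ r = Z' j ∨ r = T j ∨ r = T' j) := by grind
  exact ⟨j, j.lt_succ_self, by grind [copyInterior]⟩

theorem exists_le_mem_copyInterior (hr : r ∈ insert (X i) (copyInterior i))
    (hmove : ClosedAdj ChainGraph r r') (hfar : ¬ ClosedAdj ChainGraph O r') :
    ∃ k ≤ i, r' ∈ copyInterior k := by
  obtain ⟨k, hk⟩ := (closedAdj_O_or_mem_copyInterior r').resolve_left hfar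
  refine ⟨k, ?_, hk⟩
  rcases hr with rfl | rfl | rfl | rfl | rfl | rfl <;>
    rcases hk with rfl | rfl | rfl | rfl | rfl <;>
    grind [closedAdj_X_iff, closedAdj_Z_iff, closedAdj_Z'_iff, closedAdj_T_iff, closedAdj_T'_iff,
      closedAdj_W_iff]

theorem copWinsFrom_Z'_X (hW : ∀ k < i, CopWinsFrom ChainGraph (X (k + 1)) (W k)) :
    CopWinsFrom ChainGraph (Z' i) (X i) := by
  refine .of_move (c' := X (i + 1)) (by simp) fun r hmove hfar => ?_
  refine .of_move (c' := O) (by simp) fun r' hmove' hfar' => ?_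
  obtain ⟨j, hji, hr⟩ := exists_lt_mem_insert_X_copyInterior hmove hfar
  obtain ⟨k, hkj, hr'⟩ := exists_le_mem_copyInterior hr hmove' hfar'
  exact copWinsFrom_of_mem_copyInterior (hW k (hkj.trans_lt hji)) hr' (by simp)

theorem copWinsFrom_X_succ_W (i : ℕ) : CopWinsFrom ChainGraph (X (i + 1)) (W i) := by
  induction i using Nat.strong_induction_on with
  | _ i ih => exact copWinsFrom_X_succ_W_of_Z'_X (copWinsFrom_Z'_X ih)

theorem copWinsFrom_O (r : ChainVert) : CopWinsFrom ChainGraph O r := by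
  obtain hnear | ⟨i, hr⟩ := closedAdj_O_or_mem_copyInterior r
  · exact .of_closedAdj hnear
  · exact copWinsFrom_of_mem_copyInterior (copWinsFrom_X_succ_W i) hr (by simp)

theorem copWin : CopWin ChainGraph :=
  copWin_of_forall_copWinsFrom copWinsFrom_O

end ChainGraph

theorem chainGraph_copWin_not_constructible :
    CopWin ChainGraph ∧ ¬ Constructible ChainGraph :=
  ⟨ChainGraph.copWin, ChainGraph.not_constructible⟩
end

section
/- There exists a countable connected graph that is locally finite (every vertex has finite degree) and locally constructible, but is not a weak cop win. -/
universe u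

/-- `G` is locally constructible: every finite set of vertices is contained in a finite set
inducing a constructible subgraph. -/
def LocallyConstructible {V : Type u} (G : SimpleGraph V) : Prop :=
  ∀ A : Set V, A.Finite → ∃ U : Set V, A ⊆ U ∧ U.Finite ∧ Constructible (G.induce U)

/-!
The graph is a locally finite infinite sphere: an increasing union of iterated suspensions, each
much longer than the previous one. A finite set of vertices lies in a hemisphere of some sphere of
the sequence, and a hemisphere contracts to its pole, so the graph is locally constructible.

The robber stays on the `p`-th sphere and keeps antipodal to the cop in the coordinates below `p`.
If the cop goes to a pole of coordinate `p`, where lower coordinates are irrelevant to his moves,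
the robber runs to the opposite pole, where he can become antipodal again in a single move. If the
cop threatens from a higher coordinate `q`, he is far enough away for the robber to return to the
lowest sphere and to start anew with `q` in place of `p`. If this happens infinitely often, the
robber visits the finite lowest part of the graph infinitely often; otherwise `p` is eventually
constant and the robber stays on a finite sphere. Either way he returns to some vertex infinitely
often.
-/

/-! ### Constructible graphs -/

section Constructible

variable {V : Type u} {G : SimpleGraph V}

theorem DominatesOn.adj {S : Set V} {x y : V} (h : DominatesOn G S y x) (hx : x ∈ S) :
    G.Adj y x :=
  (h.2 x hx (Or.inl rfl)).resolve_left h.1.symm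

theorem Constructible.preconnected (h : Constructible G) : G.Preconnected := by
  obtain ⟨r, hr, hspec⟩ := h
  intro v w
  obtain ⟨root, -, hroot⟩ := hr.wf.has_min Set.univ ⟨v, Set.mem_univ v⟩
  have reachable_root (x : V) : G.Reachable x root := by
    induction x using hr.wf.induction with
    | h x ih =>
      by_cases hx : ∃ y, r y x
      · obtain ⟨y, hyx, hdom⟩ := hspec x hx
        exact (hdom.adj (Or.inr rfl)).symm.reachable.trans (ih y hyx)
      · have hrx : ¬ r root x := fun h => hx ⟨root, h⟩
        rw [hr.trichotomous x root (hroot x (Set.mem_univ x)) hrx]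
  exact (reachable_root v).trans (reachable_root w).symm

theorem LocallyConstructible.preconnected (h : LocallyConstructible G) : G.Preconnected := by
  intro v w
  obtain ⟨U, hU, -, hcon⟩ := h {v, w} (Set.toFinite _)
  have hv : v ∈ U := hU (Set.mem_insert v {w})
  have hw : w ∈ U := hU (Set.mem_insert_of_mem v rfl)
  exact (hcon.preconnected ⟨v, hv⟩ ⟨w, hw⟩).map (SimpleGraph.Embedding.induce U).toHom

variable {α : Type*} [LinearOrder α] [WellFoundedLT α]

theorem constructible_of_rank (ρ : V → α) (root : V)
    (h : ∀ v, v ≠ root → ∃ y, ρ y < ρ v ∧ DominatesOn G {z | ρ z ≤ ρ v} y v) :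
    Constructible G := by
  have root_lt (v : V) : v ≠ root → ρ root < ρ v := by
    induction v using (InvImage.wf ρ wellFounded_lt).induction with
    | h v ih =>
      intro hv
      obtain ⟨y, hy, -⟩ := h v hv
      rcases eq_or_ne y root with rfl | hne
      · exact hy
      · exact (ih y hy hne).trans hy
  let f : V ↪ α × V := ⟨fun v => (ρ v, v), fun _ _ h => congrArg Prod.snd h⟩
  let r : V → V → Prop := Order.Preimage f (Prod.Lex (· < ·) WellOrderingRel)
  have rank_le {a b : V} (hab : r a b) : ρ a ≤ ρ b := by
    rcases Prod.lex_iff.1 hab with hlt | heq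
    exacts [hlt.le, heq.1.le]
  refine ⟨r, (RelEmbedding.preimage f _).isWellOrder, fun v ⟨u, huv⟩ => ?_⟩
  have hv : v ≠ root := by
    rintro rfl
    have huv' : u ≠ v := fun he => irrefl_of (Prod.Lex (· < ·) WellOrderingRel) (f v) (he ▸ huv)
    exact (root_lt u huv').not_ge (rank_le huv)
  obtain ⟨y, hyv, hne, hdom⟩ := h v hv
  refine ⟨y, Prod.Lex.left _ _ hyv, hne, fun z hz => hdom z ?_⟩
  rcases hz with hzv | rfl
  exacts [rank_le hzv, le_rfl]

theorem constructible_induce_of_rank {U : Set V} (ρ : V → α) {root : V} (hroot : root ∈ U)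
    (h : ∀ v ∈ U, v ≠ root →
      ∃ y ∈ U, ρ y < ρ v ∧ DominatesOn G {z | z ∈ U ∧ ρ z ≤ ρ v} y v) :
    Constructible (G.induce U) := by
  refine constructible_of_rank (fun v : U => ρ v) ⟨root, hroot⟩ fun v hv => ?_
  obtain ⟨y, hyU, hyv, hne, hdom⟩ := h v v.2 (Subtype.coe_ne_coe.2 hv)
  refine ⟨⟨y, hyU⟩, hyv, fun he => hne (congrArg Subtype.val he), fun z hz hvz => ?_⟩
  simpa only [Subtype.ext_iff, SimpleGraph.comap_adj, Function.Embedding.subtype_apply] using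
    hdom z ⟨z.2, hz⟩ (hvz.imp_left (congrArg Subtype.val))

end Constructible

/-! ### Evading a cop strategy -/

section Evasion

variable {V : Type u} {G : SimpleGraph V}

theorem LegalCop.eq_or_adj_append {σ : List V → V} (hσ : LegalCop G σ) (l : List V) (v : V) :
    σ (l ++ [v]) = σ l ∨ G.Adj (σ l) (σ (l ++ [v])) := by
  simpa only [List.dropLast_concat] using hσ (l ++ [v]) (List.concat_ne_nil v l)

theorem copPos_succ (σ : List V → V) (r : ℕ → V) (n : ℕ) :
    copPos σ r (n + 1) = σ ((List.ofFn fun i : Fin n => r i) ++ [r n]) := by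
  simp only [copPos, List.ofFn_succ', List.concat_eq_append, Fin.val_castSucc, Fin.val_last]

theorem LegalCop.not_caught {σ : List V → V} (hσ : LegalCop G σ) {r : ℕ → V}
    (hr : ∀ n, ¬ (r n = copPos σ r n ∨ G.Adj (copPos σ r n) (r n))) : ¬ Caught σ r := by
  rintro ⟨n, hn | hn⟩
  · exact hr n (Or.inl hn.symm)
  · have hmove := hσ.eq_or_adj_append (List.ofFn fun i : Fin n => r i) (r n)
    rw [← copPos_succ σ r n, hn] at hmove
    exact hr n hmove

theorem LegalCop.exists_run_of_invariant {σ : List V → V} (hσ : LegalCop G σ) {S : Type*}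
    {pos : S → V} {Inv : S → V → Prop} {Move : S → S → Prop} (init : ∃ s, Inv s (σ []))
    (step : ∀ {s c c'}, Inv s c → (c' = c ∨ G.Adj c c') → ∃ s', Inv s' c' ∧ Move s s') :
    ∃ s : ℕ → S, (∀ n, Move (s n) (s (n + 1))) ∧ ∀ n, Inv (s n) (copPos σ (pos ∘ s) n) := by
  obtain ⟨s₀, hs₀⟩ := init
  have step' (t : {t : List V × S // Inv t.2 (σ t.1)}) :
      ∃ t' : {t : List V × S // Inv t.2 (σ t.1)},
        t'.1.1 = t.1.1 ++ [pos t.1.2] ∧ Move t.1.2 t'.1.2 := by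
    obtain ⟨s', hinv, hmove⟩ := step t.2 (hσ.eq_or_adj_append t.1.1 (pos t.1.2))
    exact ⟨⟨(_, s'), hinv⟩, rfl, hmove⟩
  choose next history_next move_next using step'
  let play (n : ℕ) := next^[n] ⟨([], s₀), hs₀⟩
  have play_succ (n : ℕ) : play (n + 1) = next (play n) := Function.iterate_succ_apply' next n _
  have history (n : ℕ) : (play n).1.1 = List.ofFn fun i : Fin n => pos (play i).1.2 := by
    induction n with
    | zero => rfl
    | succ n ih =>
      rw [play_succ, history_next, ih, List.ofFn_succ', List.concat_eq_append]
      rfl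
  refine ⟨fun n => (play n).1.2, fun n => ?_, fun n => ?_⟩
  · simpa only [play_succ] using move_next (play n)
  · have hinv := (play n).2
    rwa [history] at hinv

theorem exists_infinite_fiber_of_phases {P : Type*} {base : Set V} {region : P → Set V}
    (hbase : base.Finite) (hregion : ∀ p, (region p).Finite) {r : ℕ → V} {phase : ℕ → P}
    (mem_region : ∀ n, r n ∈ region (phase n))
    (phase_succ : ∀ n, phase (n + 1) = phase n ∨ r (n + 1) ∈ base) :
    ∃ v, {n | r n = v}.Infinite := by
  by_contra! hfin
  have finite_visits {s : Set V} (hs : s.Finite) : (r ⁻¹' s).Finite :=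
    hs.preimage' fun v _ => hfin v
  obtain ⟨N, hN⟩ := (finite_visits hbase).bddAbove
  have phase_eq (n : ℕ) (hn : N ≤ n) : phase n = phase N := by
    induction n, hn using Nat.le_induction with
    | base => rfl
    | succ n hn ih =>
      refine ((phase_succ n).resolve_right fun hmem => ?_).trans ih
      exact (hN hmem).not_gt (Nat.lt_succ_of_le hn)
  refine Set.Ici_infinite N ((finite_visits (hregion (phase N))).subset fun n hn => ?_)
  exact phase_eq n hn ▸ mem_region n

theorem not_weakCopWin_of_phased_invariant {P : Type*} {Inv : P → V → V → Prop}
    {base : Set V} {region : P → Set V} (hbase : base.Finite) (hregion : ∀ p, (region p).Finite)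
    (mem_region : ∀ {p v c}, Inv p v c → v ∈ region p)
    (safe : ∀ {p v c}, Inv p v c → ¬ (v = c ∨ G.Adj c v))
    (init : ∀ c, ∃ p v, Inv p v c)
    (step : ∀ {p v c c'}, Inv p v c → (c' = c ∨ G.Adj c c') →
      ∃ p' v', Inv p' v' c' ∧ (v' = v ∨ G.Adj v v') ∧ (p' = p ∨ v' ∈ base)) :
    ¬ WeakCopWin G := by
  rintro ⟨σ, hσ, hwin⟩
  obtain ⟨s, hmove, hinv⟩ := hσ.exists_run_of_invariant (S := P × V) (pos := Prod.snd)
    (Inv := fun s c => Inv s.1 s.2 c)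
    (Move := fun s s' => (s'.2 = s.2 ∨ G.Adj s.2 s'.2) ∧ (s'.1 = s.1 ∨ s'.2 ∈ base))
    (by obtain ⟨p, v, h⟩ := init (σ []); exact ⟨(p, v), h⟩)
    (fun hs hc => by obtain ⟨p', v', h⟩ := step hs hc; exact ⟨(p', v'), h⟩)
  obtain ⟨v, hv⟩ := exists_infinite_fiber_of_phases hbase hregion
    (r := fun n => (s n).2) (phase := fun n => (s n).1)
    (fun n => mem_region (hinv n)) (fun n => (hmove n).2)
  rcases hwin (fun n => (s n).2) (fun n => (hmove n).1) with hcaught | hfin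
  · exact hσ.not_caught (fun n => safe (hinv n)) hcaught
  · exact hv (hfin v)

end Evasion

/-! ### The tower graph -/

theorem exists_sign_mul_eq_natAbs (a : ℤ) : ∃ s : ℤ, (s = 1 ∨ s = -1) ∧ s * a = a.natAbs := by
  rcases le_total 0 a with h | h
  · exact ⟨1, Or.inl rfl, by omega⟩
  · exact ⟨-1, Or.inr rfl, by omega⟩

theorem natAbs_sub_sign (a : ℤ) : (a - a.sign).natAbs = a.natAbs - 1 := by
  rcases lt_trichotomy a 0 with h | rfl | h
  · rw [Int.sign_eq_neg_one_of_neg h]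
    omega
  · rfl
  · rw [Int.sign_eq_one_of_pos h]
    omega

/-- The absolute value of a tower coordinate at its poles. The base `16` makes each radius exceed
the time the robber spends on the lower coordinates (`radius_gap`). -/
def radius (k : ℕ) : ℕ := 16 ^ k

theorem radius_mono : Monotone radius := pow_right_mono₀ (by norm_num)

theorem radius_gap {l k : ℕ} (h : l < k) : 4 * radius l + 4 * k + 7 ≤ radius k := by
  induction k, h using Nat.le_induction with
  | base =>
    have hl : l < 16 ^ l := Nat.lt_pow_self (by norm_num)
    simp only [radius, pow_succ]
    omega
  | succ k hk ih =>
    simp only [radius, pow_succ] at ih ⊢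
    omega

/-- The vertices of the tower graph. The coordinates up to `height` are a point of an iterated
suspension of the two-point sphere `coord 0 = ±1`: the points with `|coord k| = radius k` stand for
the poles of the `k`-th suspension. Poles are not contracted; adjacency ignores the coordinates
below a pole instead. -/
@[ext]
structure TowerVertex where
  coord : ℕ → ℤ
  height : ℕ
  natAbs_coord_zero : (coord 0).natAbs = 1
  natAbs_coord_le : ∀ k, (coord k).natAbs ≤ radius k
  coord_eq_zero : ∀ k, height < k → coord k = 0

namespace TowerVertex

variable {v w : TowerVertex} {k l p : ℕ}

/-- `v` lies at one of the two poles of coordinate `k`. Every vertex is a pole of coordinate `0`. -/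
def IsPole (v : TowerVertex) (k : ℕ) : Prop := (v.coord k).natAbs = radius k

/-- From index `k` on, corresponding coordinates differ by at most one. -/
def CloseFrom (k : ℕ) (v w : TowerVertex) : Prop :=
  ∀ j, k ≤ j → (v.coord j - w.coord j).natAbs ≤ 1

/-- Above index `l`, `v` is at least two steps away from every pole. -/
def InteriorAbove (l : ℕ) (v : TowerVertex) : Prop :=
  ∀ k, l < k → (v.coord k).natAbs + 1 < radius k

/-- Equality or adjacency in the tower graph. Only the coordinates from some pole of `v` or `w`
upwards are compared; this makes the sphere below a pole collapse to a point. -/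
structure Near (v w : TowerVertex) : Prop where
  height_le : v.height ≤ w.height + 1
  le_height : w.height ≤ v.height + 1
  exists_isPole : ∃ k, (IsPole v k ∨ IsPole w k) ∧ CloseFrom k v w

theorem isPole_zero (v : TowerVertex) : v.IsPole 0 := v.natAbs_coord_zero

theorem CloseFrom.refl (k : ℕ) (v : TowerVertex) : CloseFrom k v v := fun j _ => by omega

theorem CloseFrom.symm (h : CloseFrom k v w) : CloseFrom k w v := fun j hj => by
  have := h j hj
  omega

theorem near_of_closeFrom_zero (h₁ : v.height ≤ w.height + 1) (h₂ : w.height ≤ v.height + 1)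
    (h : CloseFrom 0 v w) : Near v w :=
  ⟨h₁, h₂, 0, Or.inl v.isPole_zero, h⟩

theorem Near.refl (v : TowerVertex) : Near v v :=
  near_of_closeFrom_zero (Nat.le_succ _) (Nat.le_succ _) (CloseFrom.refl 0 v)

theorem Near.symm (h : Near v w) : Near w v := by
  obtain ⟨h₁, h₂, k, hk, hclose⟩ := h
  exact ⟨h₂, h₁, k, hk.symm, hclose.symm⟩

theorem interiorAbove_of_height_le (h : v.height ≤ l) : InteriorAbove l v := fun k hk => by
  have := v.coord_eq_zero k (h.trans_lt hk)
  have := radius_gap hk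
  omega

theorem Near.exists_isPole_le (h : Near v w) (hv : InteriorAbove l v) :
    ∃ k ≤ l, (IsPole v k ∨ IsPole w k) ∧ CloseFrom k v w := by
  obtain ⟨-, -, k, hpole, hclose⟩ := h
  refine ⟨k, ?_, hpole, hclose⟩
  by_contra! hlk
  have hint := hv k hlk
  have := hclose k le_rfl
  simp only [IsPole] at hpole
  omega

theorem Near.closeFrom (h : Near v w) (hv : InteriorAbove l v) : CloseFrom l v w := by
  obtain ⟨k, hkl, -, hclose⟩ := h.exists_isPole_le hv
  exact fun j hj => hclose j (hkl.trans hj)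

theorem finite_setOf_height_le (n : ℕ) : {v : TowerVertex | v.height ≤ n}.Finite := by
  let truncate (v : TowerVertex) : ℕ × (Fin (n + 1) → ℤ) := (v.height, fun k => v.coord k)
  let box : Set (Fin (n + 1) → ℤ) :=
    {f | ∀ k : Fin (n + 1), f k ∈ Set.Icc (-(radius k : ℤ)) (radius k)}
  have hbox : (Set.Iic n ×ˢ box).Finite :=
    (Set.finite_Iic n).prod (Set.Finite.pi' fun _ => Set.finite_Icc _ _)
  refine Set.Finite.of_injOn (f := truncate) ?_ ?_ hbox
  · refine fun v hv => ⟨hv, fun k => ?_⟩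
    have := v.natAbs_coord_le k
    exact (⟨by omega, by omega⟩ : v.coord k ∈ Set.Icc (-(radius k : ℤ)) (radius k))
  · intro v hv w hw h
    obtain ⟨hheight, hcoord⟩ := Prod.ext_iff.1 h
    refine TowerVertex.ext (funext fun k => ?_) hheight
    rcases Nat.lt_or_ge n k with hk | hk
    · rw [v.coord_eq_zero k (lt_of_le_of_lt hv hk), w.coord_eq_zero k (lt_of_le_of_lt hw hk)]
    · exact congrFun hcoord ⟨k, Nat.lt_succ_of_le hk⟩

instance : Countable TowerVertex := by
  have hunion : (⋃ n, {v : TowerVertex | v.height ≤ n}) = Set.univ :=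
    Set.eq_univ_of_forall fun v => Set.mem_iUnion.2 ⟨v.height, le_refl v.height⟩
  rw [← Set.countable_univ_iff, ← hunion]
  exact Set.countable_iUnion fun n => (finite_setOf_height_le n).countable

/-- The same point, regarded as a vertex one level higher. -/
@[simps]
def raise (v : TowerVertex) : TowerVertex where
  coord := v.coord
  height := v.height + 1
  natAbs_coord_zero := v.natAbs_coord_zero
  natAbs_coord_le := v.natAbs_coord_le
  coord_eq_zero k hk := v.coord_eq_zero k (by omega)

/-- The vertex obtained from `v` by moving the positive coordinate `p` to `a`. -/
@[simps]
def update (v : TowerVertex) (p : ℕ) (a : ℤ) (hp : 0 < p) (hv : p ≤ v.height)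
    (ha : a.natAbs ≤ radius p) : TowerVertex where
  coord := Function.update v.coord p a
  height := v.height
  natAbs_coord_zero := by
    rw [Function.update_of_ne hp.ne]
    exact v.natAbs_coord_zero
  natAbs_coord_le k := by
    rcases eq_or_ne k p with rfl | hk
    · rwa [Function.update_self]
    · rw [Function.update_of_ne hk]
      exact v.natAbs_coord_le k
  coord_eq_zero k hk := by
    rw [Function.update_of_ne (hv.trans_lt hk).ne']
    exact v.coord_eq_zero k hk

theorem near_raise (v : TowerVertex) : Near v v.raise :=
  near_of_closeFrom_zero (by simp only [raise_height]; omega) le_rfl (CloseFrom.refl 0 v)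

theorem Near.raise (h : Near v w) (hle : v.height ≤ w.height) : Near v.raise w :=
  ⟨Nat.succ_le_succ hle, h.le_height.trans (Nat.le_succ _), h.exists_isPole⟩

theorem near_update {a : ℤ} (hp : 0 < p) (hv : p ≤ v.height) (ha : a.natAbs ≤ radius p)
    (hclose : (v.coord p - a).natAbs ≤ 1) : Near v (v.update p a hp hv ha) := by
  refine near_of_closeFrom_zero (Nat.le_succ _) (Nat.le_succ _) fun j _ => ?_
  rw [update_coord]
  rcases eq_or_ne j p with rfl | hj
  · rwa [Function.update_self]
  · rw [Function.update_of_ne hj]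
    omega

end TowerVertex

open TowerVertex

/-- A locally finite version of an infinite sphere, in which each hemisphere contracts to its
pole. -/
def towerGraph : SimpleGraph TowerVertex where
  Adj v w := v ≠ w ∧ Near v w
  symm := ⟨fun _ _ h => ⟨h.1.symm, h.2.symm⟩⟩
  loopless := ⟨fun _ h => h.1 rfl⟩

theorem eq_or_adj_towerGraph_iff {v w : TowerVertex} :
    (w = v ∨ towerGraph.Adj v w) ↔ Near v w := by
  refine ⟨?_, fun h => or_iff_not_imp_left.2 fun hne => ⟨Ne.symm hne, h⟩⟩
  rintro (rfl | h)
  exacts [Near.refl w, h.2]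

theorem finite_neighborSet_towerGraph (v : TowerVertex) : (towerGraph.neighborSet v).Finite :=
  (finite_setOf_height_le (v.height + 1)).subset fun _ hw => hw.2.le_height

theorem dominatesOn_towerGraph_iff {S : Set TowerVertex} {v w : TowerVertex} :
    DominatesOn towerGraph S w v ↔ w ≠ v ∧ ∀ z ∈ S, Near v z → Near w z := by
  simp only [DominatesOn, eq_or_adj_towerGraph_iff]

/-! ### Local constructibility -/

namespace TowerVertex

variable {v z : TowerVertex} {m p : ℕ}

/-- The hemisphere `0 ≤ coord (m + 1)` of height at most `m + 1`. It contains every vertex of height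
at most `m`, since the coordinate `m + 1` of such a vertex vanishes. -/
def upperHalf (m : ℕ) : Set TowerVertex := {v | v.height ≤ m + 1 ∧ 0 ≤ v.coord (m + 1)}

/-- The pole of coordinate `m + 1` at which the construction of `upperHalf m` starts. -/
@[simps]
def northPole (m : ℕ) : TowerVertex where
  coord k := if k = 0 then 1 else if k = m + 1 then radius k else 0
  height := m + 1
  natAbs_coord_zero := rfl
  natAbs_coord_le k := by
    have := radius_mono (Nat.zero_le k)
    simp only [radius, pow_zero] at this ⊢
    split_ifs <;> omega
  coord_eq_zero k hk := by
    rw [if_neg (by omega), if_neg (by omega)]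

theorem northPole_coord_succ (m : ℕ) : (northPole m).coord (m + 1) = radius (m + 1) := by
  rw [northPole_coord, if_neg m.succ_ne_zero, if_pos rfl]

theorem northPole_mem_upperHalf (m : ℕ) : northPole m ∈ upperHalf m :=
  ⟨le_rfl, (northPole_coord_succ m).symm ▸ Int.natCast_nonneg _⟩

open Classical in
/-- The construction order of `upperHalf m`: first `northPole m`, then the vertices of height
`m + 1` by increasing distance from the pole, then the remaining ones by decreasing height. The
subtraction of heights does not truncate on `upperHalf m`. -/
noncomputable def rank (m : ℕ) (v : TowerVertex) : ℕ :=
  if v = northPole m then 0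
  else (m + 1 - v.height) + (radius (m + 1) + 1 - v.coord (m + 1)).toNat

theorem rank_northPole (m : ℕ) : rank m (northPole m) = 0 := if_pos rfl

theorem rank_of_ne (hv : v ≠ northPole m) :
    rank m v = (m + 1 - v.height) + (radius (m + 1) + 1 - v.coord (m + 1)).toNat := if_neg hv

theorem rank_pos (hv : v ≠ northPole m) : 0 < rank m v := by
  have := v.natAbs_coord_le (m + 1)
  rw [rank_of_ne hv]
  omega

theorem rank_le (m : ℕ) (v : TowerVertex) :
    rank m v ≤ (m + 1 - v.height) + (radius (m + 1) + 1 - v.coord (m + 1)).toNat := by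
  unfold rank
  split_ifs <;> omega

theorem height_le_and_coord_le_of_rank_le (hv : v ∈ upperHalf m) (hz : z ∈ upperHalf m)
    (hne : v ≠ northPole m) (hrank : rank m z ≤ rank m v) :
    v.height ≤ z.height ∧ v.coord (m + 1) ≤ z.coord (m + 1) := by
  obtain ⟨hv_height, hv_coord⟩ := hv
  obtain ⟨hz_height, hz_coord⟩ := hz
  have := v.natAbs_coord_le (m + 1)
  have hv_zero := v.coord_eq_zero (m + 1)
  have hz_zero := z.coord_eq_zero (m + 1)
  rcases eq_or_ne z (northPole m) with rfl | hz_ne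
  · rw [northPole_coord_succ, northPole_height]
    omega
  · rw [rank_of_ne hne, rank_of_ne hz_ne] at hrank
    omega

theorem near_of_isPole (hv : v.height = p) (hz : z.height = p) (hpole : v.IsPole p)
    (hclose : (v.coord p - z.coord p).natAbs ≤ 1) : Near v z := by
  refine ⟨by omega, by omega, p, Or.inl hpole, fun j hj => ?_⟩
  rcases hj.eq_or_lt with rfl | hlt
  · exact hclose
  · rw [v.coord_eq_zero j (hv.trans_lt hlt), z.coord_eq_zero j (hz.trans_lt hlt)]
    exact zero_le_one

theorem Near.update_add_one (h : Near v z) (hp : 0 < p) (hv : v.height = p)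
    (hnonneg : 0 ≤ v.coord p) (hlt : v.coord p + 1 < radius p) (hle : v.coord p ≤ z.coord p) :
    Near (v.update p (v.coord p + 1) hp hv.ge (by omega)) z := by
  obtain ⟨k, hkp, hpole, hclose⟩ := h.exists_isPole_le (interiorAbove_of_height_le hv.le)
  have hclose_p := hclose p hkp
  have hk : k ≠ p := by
    rintro rfl
    simp only [IsPole] at hpole
    omega
  refine ⟨h.height_le, h.le_height, k, ?_, fun j hj => ?_⟩
  · simpa only [IsPole, update_coord, Function.update_of_ne hk] using hpole
  · rw [update_coord]
    rcases eq_or_ne j p with rfl | hjp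
    · rw [Function.update_self]
      omega
    · rw [Function.update_of_ne hjp]
      exact hclose j hj

theorem near_northPole (hz : z.height = m + 1) (hle : (radius (m + 1) : ℤ) ≤ z.coord (m + 1) + 1) :
    Near (northPole m) z := by
  have hcoord := northPole_coord_succ m
  have hz_le := z.natAbs_coord_le (m + 1)
  refine near_of_isPole (p := m + 1) rfl hz ?_ (by omega)
  rw [IsPole, hcoord, Int.natAbs_natCast]

theorem exists_rank_lt_forall_near (hv : v ∈ upperHalf m) (hne : v ≠ northPole m) :
    ∃ y ∈ upperHalf m, rank m y < rank m v ∧ ∀ z ∈ upperHalf m,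
      v.height ≤ z.height → v.coord (m + 1) ≤ z.coord (m + 1) → Near v z → Near y z := by
  obtain ⟨hheight, hnonneg⟩ := hv
  have hrank := rank_of_ne hne
  rcases hheight.lt_or_eq with hlow | htop
  · refine ⟨v.raise, ⟨hlow, hnonneg⟩, ?_, fun z _ hle _ h => h.raise hle⟩
    have := rank_le m v.raise
    simp only [raise_height, raise_coord] at this
    omega
  rcases lt_or_ge (v.coord (m + 1) + 1) (radius (m + 1)) with hlt | hge
  · let y := v.update (m + 1) (v.coord (m + 1) + 1) m.succ_pos htop.ge (by omega)
    have hy : y.coord (m + 1) = v.coord (m + 1) + 1 := Function.update_self ..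
    have hy_height : y.height = v.height := rfl
    refine ⟨y, ⟨hheight, by omega⟩, ?_, fun z _ _ hle h =>
      h.update_add_one m.succ_pos htop hnonneg hlt hle⟩
    have := rank_le m y
    omega
  · refine ⟨northPole m, northPole_mem_upperHalf m, rank_northPole m ▸ rank_pos hne,
      fun z hz hle_height hle_coord _ => ?_⟩
    exact near_northPole (le_antisymm hz.1 (htop ▸ hle_height)) (by omega)

theorem exists_rank_lt_dominatesOn (hv : v ∈ upperHalf m) (hne : v ≠ northPole m) :
    ∃ y ∈ upperHalf m, rank m y < rank m v ∧
      DominatesOn towerGraph {z | z ∈ upperHalf m ∧ rank m z ≤ rank m v} y v := by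
  obtain ⟨y, hy, hlt, hnear⟩ := exists_rank_lt_forall_near hv hne
  refine ⟨y, hy, hlt, dominatesOn_towerGraph_iff.2 ⟨fun he => (he ▸ hlt).false, ?_⟩⟩
  rintro z ⟨hz, hrank⟩
  obtain ⟨hheight, hcoord⟩ := height_le_and_coord_le_of_rank_le hv hz hne hrank
  exact hnear z hz hheight hcoord

end TowerVertex

theorem locallyConstructible_towerGraph : LocallyConstructible towerGraph := by
  intro A hA
  obtain ⟨m, hm⟩ := (hA.image height).bddAbove
  refine ⟨upperHalf m, fun v hv => ?_,
    (finite_setOf_height_le (m + 1)).subset fun v hv => hv.1,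
    constructible_induce_of_rank (rank m) (northPole_mem_upperHalf m) fun v hv hne =>
      exists_rank_lt_dominatesOn hv hne⟩
  have hheight : v.height ≤ m := hm (Set.mem_image_of_mem height hv)
  exact ⟨hheight.trans m.le_succ, (v.coord_eq_zero _ (Nat.lt_succ_of_le hheight)).ge⟩

theorem connected_towerGraph : towerGraph.Connected :=
  { preconnected := locallyConstructible_towerGraph.preconnected
    nonempty := ⟨northPole 0⟩ }

/-! ### The robber's strategy -/

namespace TowerVertex

variable {v v' c c' : TowerVertex} {p q n n' : ℕ} {s : ℤ}

/-- Above index `p`, the cop is closer to the equator than to the poles, hence no immediate threat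
to a robber of height `p`. -/
def Calm (p : ℕ) (c : TowerVertex) : Prop := ∀ k, p < k → 2 * (c.coord k).natAbs < radius k

/-- The robber at `v` is antipodal to the cop at `c` in the coordinates below `p`. -/
structure Mirroring (p : ℕ) (v c : TowerVertex) : Prop where
  height_eq : v.height = p
  coord_eq_neg : ∀ k < p, v.coord k = -c.coord k
  robber_lt : (v.coord p).natAbs < radius p
  cop_lt : (c.coord p).natAbs < radius p
  calm : Calm p c

/-- The cop is on side `s = ±1` of coordinate `p`, and the robber runs to the opposite pole, by
climbing to height `p` and then decreasing `s * coord p`. This takes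
`(p - height) + (radius p + s * coord p)` moves: until then the cop stays two steps behind in
coordinate `p` (`lead`) and away from the higher poles (`budget`). -/
structure Fleeing (p : ℕ) (s : ℤ) (v c : TowerVertex) : Prop where
  pos : 0 < p
  sign : s = 1 ∨ s = -1
  height_le : v.height ≤ p
  lead : 2 + (p - v.height) + s * v.coord p ≤ s * c.coord p
  budget : ∀ k, p < k →
    (c.coord k).natAbs + (p - v.height) + (radius p + s * v.coord p) + 1 < (radius k : ℤ)

/-- The cop threatens from side `s = ±1` of a coordinate `q` above the height `p` of the robber, who
returns to height `0` in `n + height` moves: `n` moves shrink all positive coordinates to `0`, the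
others decrease the height. The bounds `lead` and `budget` leave time for the flight in coordinate
`q` that follows. -/
structure Retreating (p q : ℕ) (s : ℤ) (n : ℕ) (v c : TowerVertex) : Prop where
  lt : p < q
  sign : s = 1 ∨ s = -1
  height_le : v.height ≤ p
  coord_le : ∀ k, 0 < k → (v.coord k).natAbs ≤ n
  lead : 2 + (n + v.height + q) ≤ s * c.coord q
  budget : ∀ k, q < k →
    (c.coord k).natAbs + (n + v.height + q) + radius q + 1 < radius k

/-- The invariant of the robber's strategy in phase `p`: robber at `v`, cop at `c`, cop to move. -/
def Evading (p : ℕ) (v c : TowerVertex) : Prop :=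
  Mirroring p v c ∨ (∃ s, Fleeing p s v c) ∨ ∃ q s n, Retreating p q s n v c

/-- The robber at `v` in phase `p` can restore the invariant after the cop's move to `c'`, changing
the phase only if the new height is at most `1`. -/
def HasReply (p : ℕ) (v c' : TowerVertex) : Prop :=
  ∃ p' v', Evading p' v' c' ∧ Near v v' ∧ (p' = p ∨ v'.height ≤ 1)

theorem Evading.hasReply (h : Evading p v' c') (hv : Near v v') : HasReply p v c' :=
  ⟨p, v', h, hv, Or.inl rfl⟩

theorem Calm.interiorAbove (h : Calm p c) : InteriorAbove p c := fun k hk => by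
  have := h k hk
  have := radius_gap hk
  omega

theorem Evading.height_le (h : Evading p v c) : v.height ≤ p := by
  rcases h with h | ⟨s, h⟩ | ⟨q, s, n, h⟩
  exacts [h.height_eq.le, h.height_le, h.height_le]

theorem Mirroring.not_near (h : Mirroring p v c) : ¬ Near c v := by
  intro hnear
  obtain ⟨k, hkp, hpole, hclose⟩ := hnear.exists_isPole_le h.calm.interiorAbove
  have hclose_k := hclose k le_rfl
  have hrobber := h.robber_lt
  have hcop := h.cop_lt
  have hradius := radius_mono (Nat.zero_le k)
  simp only [IsPole] at hpole
  simp only [radius, pow_zero] at hradius hpole hrobber hcop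
  rcases hkp.lt_or_eq with hk | rfl
  · have := h.coord_eq_neg k hk
    omega
  · omega

theorem Fleeing.not_near (h : Fleeing p s v c) : ¬ Near c v := by
  intro hnear
  have hclose := hnear.symm.closeFrom (interiorAbove_of_height_le h.height_le) p le_rfl
  have hlead := h.lead
  have hheight := h.height_le
  rcases h.sign with rfl | rfl <;> omega

theorem Retreating.not_near (h : Retreating p q s n v c) : ¬ Near c v := by
  intro hnear
  have hheight : v.height < q := h.height_le.trans_lt h.lt
  have hclose := hnear.symm.closeFrom (interiorAbove_of_height_le hheight.le) q le_rfl
  have hlead := h.lead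
  rw [v.coord_eq_zero q hheight] at hclose
  rcases h.sign with rfl | rfl <;> omega

theorem Evading.not_near (h : Evading p v c) : ¬ Near c v := by
  rcases h with h | ⟨s, h⟩ | ⟨q, s, n, h⟩
  exacts [h.not_near, h.not_near, h.not_near]

/-- The retreat is aimed at the highest threatened coordinate, so that no pole above it comes within
the cop's reach before the following flight ends. -/
theorem exists_retreating_of_not_calm (hv : v.height = p) (hc : ¬ Calm p c) :
    ∃ q s n, Retreating p q s n v c := by
  let threats : Set ℕ := {k | p < k ∧ radius k ≤ 2 * (c.coord k).natAbs}
  have hne : threats.Nonempty := by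
    simp only [Calm, not_forall, not_lt, exists_prop] at hc
    exact hc
  have hfin : threats.Finite := by
    refine (Set.finite_Iic c.height).subset fun k ⟨hpk, hk⟩ => ?_
    by_contra! hlt
    have := c.coord_eq_zero k (not_le.1 hlt)
    have := radius_gap hpk
    omega
  obtain ⟨q, ⟨hpq, hq⟩, hmax⟩ := Set.exists_max_image threats id hfin hne
  obtain ⟨s, hs, hsign⟩ := exists_sign_mul_eq_natAbs (c.coord q)
  have hgap := radius_gap hpq
  refine ⟨q, s, radius p, hpq, hs, hv.le, fun k _ => ?_, by omega, fun k hk => ?_⟩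
  · rcases le_or_gt k p with hkp | hkp
    · exact (v.natAbs_coord_le k).trans (radius_mono hkp)
    · rw [v.coord_eq_zero k (hv.trans_lt hkp)]
      exact Nat.zero_le _
  · have hk_calm : 2 * (c.coord k).natAbs < radius k := by
      by_contra! hle
      exact (hmax k ⟨hpq.trans hk, hle⟩).not_gt hk
    have := radius_gap hk
    omega

theorem hasReply_of_not_calm (hv : v.height = p) (hc : ¬ Calm p c') : HasReply p v c' :=
  Evading.hasReply (Or.inr (Or.inr (exists_retreating_of_not_calm hv hc))) (Near.refl v)

/-- All positive coordinates moved one step towards `0`. -/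
@[simps]
def shrink (v : TowerVertex) : TowerVertex where
  coord k := if k = 0 then v.coord k else v.coord k - (v.coord k).sign
  height := v.height
  natAbs_coord_zero := v.natAbs_coord_zero
  natAbs_coord_le k := by
    have := v.natAbs_coord_le k
    have := natAbs_sub_sign (v.coord k)
    split_ifs <;> omega
  coord_eq_zero k hk := by
    rw [v.coord_eq_zero k hk, Int.sign_zero, sub_zero, ite_self]

/-- The same point, regarded as a vertex one level lower. -/
@[simps]
def lower (v : TowerVertex) (h : ∀ k, 0 < k → v.coord k = 0) : TowerVertex where
  coord := v.coord
  height := v.height - 1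
  natAbs_coord_zero := v.natAbs_coord_zero
  natAbs_coord_le := v.natAbs_coord_le
  coord_eq_zero k hk := h k (Nat.zero_lt_of_lt hk)

theorem shrink_coord_of_pos {k : ℕ} (hk : 0 < k) :
    v.shrink.coord k = v.coord k - (v.coord k).sign := if_neg hk.ne'

theorem near_shrink (v : TowerVertex) : Near v v.shrink := by
  refine near_of_closeFrom_zero (Nat.le_succ _) (Nat.le_succ _) fun j _ => ?_
  rcases Nat.eq_zero_or_pos j with rfl | hj
  · rw [shrink_coord, if_pos rfl]
    omega
  · rw [shrink_coord_of_pos hj, sub_sub_cancel, Int.natAbs_sign]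
    split_ifs <;> omega

theorem near_lower (h : ∀ k, 0 < k → v.coord k = 0) : Near v (v.lower h) :=
  near_of_closeFrom_zero (by simp only [lower_height]; omega) (by simp only [lower_height]; omega)
    (CloseFrom.refl 0 v)

theorem Retreating.advance (h : Retreating p q s n v c) (hc : Near c c') (hheight : v'.height ≤ p)
    (hcoord : ∀ k, 0 < k → (v'.coord k).natAbs ≤ n')
    (hprogress : n' + v'.height + 1 = n + v.height) : Retreating p q s n' v' c' := by
  have hclose : CloseFrom q c c' := hc.closeFrom fun k hk => by
    have := h.budget k hk
    omega
  refine ⟨h.lt, h.sign, hheight, hcoord, ?_, fun k hk => ?_⟩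
  · have := hclose q le_rfl
    have := h.lead
    rcases h.sign with rfl | rfl <;> omega
  · have := hclose k hk.le
    have := h.budget k hk
    omega

theorem Retreating.fleeing (h : Retreating p q s 0 v c) (hv : v.height = 0) : Fleeing q s v c := by
  have hzero : v.coord q = 0 := v.coord_eq_zero q (hv.trans_lt (Nat.zero_lt_of_lt h.lt))
  refine ⟨Nat.zero_lt_of_lt h.lt, h.sign, by omega, ?_, fun k hk => ?_⟩
  · have := h.lead
    rw [hzero, mul_zero]
    omega
  · have := h.budget k hk
    rw [hzero, mul_zero]
    omega

theorem Fleeing.closeFrom (h : Fleeing p s v c) (hc : Near c c') : CloseFrom p c c' := by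
  refine hc.closeFrom fun k hk => ?_
  have := h.budget k hk
  have := h.height_le
  have := v.natAbs_coord_le p
  rcases h.sign with rfl | rfl <;> omega

theorem Fleeing.advance (h : Fleeing p s v c) (hc : Near c c') (hheight : v'.height ≤ p)
    (hprogress : v'.height - s * v'.coord p = v.height - s * v.coord p + 1) :
    Fleeing p s v' c' := by
  have hclose := h.closeFrom hc
  refine ⟨h.pos, h.sign, hheight, ?_, fun k hk => ?_⟩
  · have := hclose p le_rfl
    have := h.lead
    rcases h.sign with rfl | rfl <;> omega
  · have := hclose k hk.le
    have := h.budget k hk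
    omega

theorem fleeing_of_calm (hp : 0 < p) (hs : s = 1 ∨ s = -1) (hv : v.height = p) (hc : Calm p c)
    (hcop : s * c.coord p = radius p) (hrobber : s * v.coord p + 2 ≤ radius p) :
    Fleeing p s v c := by
  refine ⟨hp, hs, hv.le, by omega, fun k hk => ?_⟩
  have := hc k hk
  have := radius_gap hk
  omega

/-- The antipode of `c` in the coordinates below `p`, with coordinate `p` equal to `a`. -/
@[simps]
def mirror (c : TowerVertex) (p : ℕ) (a : ℤ) (hp : 0 < p) (ha : a.natAbs ≤ radius p) :
    TowerVertex where
  coord k := if k < p then -c.coord k else if k = p then a else 0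
  height := p
  natAbs_coord_zero := by rw [if_pos hp, Int.natAbs_neg, c.natAbs_coord_zero]
  natAbs_coord_le k := by
    have := c.natAbs_coord_le k
    split_ifs with hlt heq
    · rwa [Int.natAbs_neg]
    · rwa [heq]
    · exact Nat.zero_le _
  coord_eq_zero k hk := by rw [if_neg hk.not_gt, if_neg hk.ne']

theorem mirror_coord_of_lt {a : ℤ} {k : ℕ} (hp : 0 < p) (ha : a.natAbs ≤ radius p) (hk : k < p) :
    (c.mirror p a hp ha).coord k = -c.coord k := if_pos hk

theorem mirror_coord_self {a : ℤ} (hp : 0 < p) (ha : a.natAbs ≤ radius p) :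
    (c.mirror p a hp ha).coord p = a := by
  rw [mirror_coord, if_neg (lt_irrefl p), if_pos rfl]

theorem mirroring_mirror {a : ℤ} (hp : 0 < p) (ha : a.natAbs < radius p)
    (hcop : (c.coord p).natAbs < radius p) (hc : Calm p c) :
    Mirroring p (c.mirror p a hp ha.le) c where
  height_eq := rfl
  coord_eq_neg _ hk := mirror_coord_of_lt hp ha.le hk
  robber_lt := by rwa [mirror_coord_self]
  cop_lt := hcop
  calm := hc

theorem closeFrom_mirror {a : ℤ} (hp : 0 < p) (ha : a.natAbs ≤ radius p) (hv : v.height = p)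
    (hclose : (v.coord p - a).natAbs ≤ 1) : CloseFrom p v (c.mirror p a hp ha) := by
  intro j hj
  rcases hj.eq_or_lt with rfl | hlt
  · rwa [mirror_coord_self]
  · rw [v.coord_eq_zero j (hv.trans_lt hlt), coord_eq_zero _ j hlt]
    exact zero_le_one

/-- At a pole of coordinate `p` the lower coordinates do not restrict the robber's moves, so a
single move makes the robber antipodal to the cop. -/
theorem near_mirror_of_isPole {a : ℤ} (hp : 0 < p) (ha : a.natAbs ≤ radius p) (hv : v.height = p)
    (hpole : v.IsPole p) (hclose : (v.coord p - a).natAbs ≤ 1) :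
    Near v (c.mirror p a hp ha) :=
  ⟨hv.le.trans p.le_succ, hv.ge.trans (Nat.le_succ _), p, Or.inl hpole,
    closeFrom_mirror hp ha hv hclose⟩

theorem Fleeing.hasReply_of_arrived (h : Fleeing p s v c) (hc : Near c c')
    (hheight : v.height = p) (hpole : s * v.coord p = -radius p) : HasReply p v c' := by
  have hp := h.pos
  have hs := h.sign
  have hradius := radius_gap hp
  by_cases hcalm : Calm p c'
  swap
  · exact hasReply_of_not_calm hheight hcalm
  by_cases hcop : s * c'.coord p = radius p
  · have hflee : Fleeing p s v c' := fleeing_of_calm hp hs hheight hcalm hcop (by omega)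
    exact Evading.hasReply (Or.inr (Or.inl ⟨s, hflee⟩)) (Near.refl v)
  · have hlead := h.lead
    have hclose := h.closeFrom hc p le_rfl
    have hle := c'.natAbs_coord_le p
    have hcop_lt : (c'.coord p).natAbs < radius p := by rcases hs with rfl | rfl <;> omega
    have ha : (v.coord p + s).natAbs < radius p := by rcases hs with rfl | rfl <;> omega
    have hv : v.IsPole p := by
      rw [IsPole]
      rcases hs with rfl | rfl <;> omega
    exact Evading.hasReply (Or.inl (mirroring_mirror hp ha hcop_lt hcalm))
      (near_mirror_of_isPole hp ha.le hheight hv (by omega))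

theorem Fleeing.hasReply (h : Fleeing p s v c) (hc : Near c c') : HasReply p v c' := by
  have hs := h.sign
  have hbound := v.natAbs_coord_le p
  rcases h.height_le.lt_or_eq with hlow | htop
  · have hflee : Fleeing p s v.raise c' := 
      h.advance hc hlow (by simp only [raise_height, raise_coord]; omega)
    exact Evading.hasReply (Or.inr (Or.inl ⟨s, hflee⟩)) (near_raise v)
  by_cases harrived : s * v.coord p = -radius p
  · exact h.hasReply_of_arrived hc htop harrived
  · have hle : (v.coord p - s).natAbs ≤ radius p := by rcases hs with rfl | rfl <;> omega
    have hflee : Fleeing p s (v.update p (v.coord p - s) h.pos htop.ge hle) c' := by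
      refine h.advance hc h.height_le ?_
      rw [update_coord, Function.update_self, update_height]
      rcases hs with rfl | rfl <;> omega
    exact Evading.hasReply (Or.inr (Or.inl ⟨s, hflee⟩)) (near_update h.pos htop.ge hle (by omega))

theorem Retreating.hasReply (h : Retreating p q s n v c) (hc : Near c c') : HasReply p v c' := by
  rcases n with _ | n
  · have hzero (k : ℕ) (hk : 0 < k) : v.coord k = 0 := by
      have := h.coord_le k hk
      omega
    rcases Nat.eq_zero_or_pos v.height with hv | hv
    · obtain ⟨p', v', hev, hnear, -⟩ := (h.fleeing hv).hasReply hc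
      exact ⟨p', v', hev, hnear, Or.inr (hnear.le_height.trans (by omega))⟩
    · have hretreat : Retreating p q s 0 (v.lower hzero) c' :=
        h.advance hc ((Nat.sub_le _ _).trans h.height_le) h.coord_le
          (by simp only [lower_height]; omega)
      exact Evading.hasReply (Or.inr (Or.inr ⟨q, s, 0, hretreat⟩)) (near_lower hzero)
  · have hretreat : Retreating p q s n v.shrink c' := by
      refine h.advance hc h.height_le (fun k hk => ?_) (by simp only [shrink_height]; omega)
      have := h.coord_le k hk
      rw [shrink_coord_of_pos hk, natAbs_sub_sign]
      omega
    exact Evading.hasReply (Or.inr (Or.inr ⟨q, s, n, hretreat⟩)) (near_shrink v)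

theorem Mirroring.pos (h : Mirroring p v c) : 0 < p := by
  refine Nat.pos_of_ne_zero ?_
  rintro rfl
  exact h.robber_lt.ne v.isPole_zero

theorem Mirroring.near_mirror (h : Mirroring p v c) (hc : Near c c')
    (hcop : (c'.coord p).natAbs < radius p) :
    Near v (c'.mirror p (v.coord p) h.pos h.robber_lt.le) := by
  obtain ⟨k, hkp, hpole, hclose⟩ := hc.exists_isPole_le h.calm.interiorAbove
  have hk : k < p := by
    refine hkp.lt_of_ne ?_
    rintro rfl
    exact hpole.elim h.cop_lt.ne hcop.ne
  have hcoord (j : ℕ) (hj : j < p) : v.coord j = -c.coord j ∧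
      (c'.mirror p (v.coord p) h.pos h.robber_lt.le).coord j = -c'.coord j :=
    ⟨h.coord_eq_neg j hj, mirror_coord_of_lt _ _ hj⟩
  refine ⟨h.height_eq.le.trans p.le_succ, h.height_eq.ge.trans (Nat.le_succ _), k, ?_, ?_⟩
  · simpa only [IsPole, hcoord k hk, Int.natAbs_neg] using hpole
  · intro j hj
    rcases lt_or_ge j p with hlt | hge
    · rw [(hcoord j hlt).1, (hcoord j hlt).2]
      have := hclose j hj
      omega
    · exact closeFrom_mirror h.pos h.robber_lt.le h.height_eq (by omega) j hge

theorem Mirroring.hasReply (h : Mirroring p v c) (hc : Near c c') : HasReply p v c' := by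
  have hrobber := h.robber_lt
  by_cases hcalm : Calm p c'
  swap
  · exact hasReply_of_not_calm h.height_eq hcalm
  rcases (c'.natAbs_coord_le p).lt_or_eq with hcop | hcop
  · exact Evading.hasReply (Or.inl (mirroring_mirror h.pos h.robber_lt hcop hcalm))
      (h.near_mirror hc hcop)
  · obtain ⟨s, hs, hsign⟩ := exists_sign_mul_eq_natAbs (c'.coord p)
    have hle : (v.coord p - s).natAbs ≤ radius p := by omega
    have hflee : Fleeing p s (v.update p (v.coord p - s) h.pos h.height_eq.ge hle) c' := by
      refine fleeing_of_calm h.pos hs h.height_eq hcalm (hsign.trans (congrArg _ hcop)) ?_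
      rw [update_coord, Function.update_self]
      rcases hs with rfl | rfl <;> omega
    exact Evading.hasReply (Or.inr (Or.inl ⟨s, hflee⟩))
      (near_update h.pos h.height_eq.ge hle (by omega))

theorem Evading.hasReply_of_near (h : Evading p v c) (hc : Near c c') : HasReply p v c' := by
  rcases h with h | ⟨s, h⟩ | ⟨q, s, n, h⟩
  exacts [h.hasReply hc, h.hasReply hc, h.hasReply hc]

theorem exists_evading (c : TowerVertex) : ∃ p v, Evading p v c := by
  have hcalm : Calm (c.height + 1) c := fun k hk => by
    have := c.coord_eq_zero k (by omega)
    have := radius_gap hk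
    omega
  have hp : 0 < c.height + 1 := c.height.succ_pos
  have hradius := radius_gap hp
  have hcoord := c.coord_eq_zero (c.height + 1) c.height.lt_succ_self
  exact ⟨c.height + 1, c.mirror (c.height + 1) 0 hp (Nat.zero_le _),
    Or.inl (mirroring_mirror hp (by omega) (by omega) hcalm)⟩

end TowerVertex

theorem not_weakCopWin_towerGraph : ¬ WeakCopWin towerGraph :=
  not_weakCopWin_of_phased_invariant (Inv := Evading)
    (finite_setOf_height_le 1) finite_setOf_height_le
    Evading.height_le
    (fun h hnear => h.not_near (eq_or_adj_towerGraph_iff.1 hnear))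
    exists_evading
    (fun h hc => by
      obtain ⟨p', v', hev, hnear, hphase⟩ := h.hasReply_of_near (eq_or_adj_towerGraph_iff.1 hc)
      exact ⟨p', v', hev, eq_or_adj_towerGraph_iff.2 hnear, hphase⟩)

theorem exists_locallyFinite_locallyConstructible_not_weakCopWin :
    ∃ (V : Type) (G : SimpleGraph V),
      Countable V ∧ G.Connected ∧ (∀ v : V, (G.neighborSet v).Finite) ∧
      LocallyConstructible G ∧ ¬ WeakCopWin G :=
  ⟨TowerVertex, towerGraph, inferInstance, connected_towerGraph, finite_neighborSet_towerGraph,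
    locallyConstructible_towerGraph, not_weakCopWin_towerGraph⟩
end

section
/- Let G be a finite constructible graph with a fixed construction order (a linear order on its vertices as in the definition of constructibility) and a fixed domination map δ. For a vertex u, the trail of u is the finite sequence u, δ(u), δ(δ(u)), ..., ending at the root. Then for any two adjacent vertices u and v of G and any vertex u' on the trail of u, the maximal (with respect to the construction order) vertex v' on the trail of v satisfying v' ≤ u' is adjacent or equal to u'. -/
universe u

/-!
Walk down the two trails alternately, always moving the later of the two current vertices to its
parent. When `v` is replaced by its parent, the other vertex `u` comes no later than `v`, so
domination in the subgraph of the vertices up to `v` keeps the pair adjacent or equal; likewise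
for `u`. When the walk along the trail of `u` has arrived at `u'`, and the other vertex has moved
on to the first vertex of its trail that is at most `u'`, that vertex is `v'`.
-/

section Trail

variable {V : Type u} {δ : V → V}

/-- The trail of `v` under the parent map `δ`: the vertices `v`, `δ v`, `δ (δ v)`, .... It is
encoded as a set, which suffices for its maximal elements. -/
def trail (δ : V → V) (v : V) : Set V :=
  {w | ∃ k : ℕ, δ^[k] v = w}

theorem self_mem_trail (v : V) : v ∈ trail δ v :=
  ⟨0, rfl⟩

theorem apply_mem_trail (v : V) : δ v ∈ trail δ v :=
  ⟨1, rfl⟩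

theorem trail_subset_of_mem {v w : V} (hw : w ∈ trail δ v) : trail δ w ⊆ trail δ v := by
  obtain ⟨m, rfl⟩ := hw
  rintro _ ⟨k, rfl⟩
  exact ⟨k + m, Function.iterate_add_apply δ k m v⟩

theorem le_of_mem_trail [Preorder V] (hδ : ∀ v, δ v ≤ v) {v w : V} (hw : w ∈ trail δ v) :
    w ≤ v := by
  obtain ⟨k, rfl⟩ := hw
  exact Function.iterate_le_id_of_le_id hδ k v

end Trail

/-- A domination map for a symmetric relation `R` on an ordered set: `δ v` comes no later than `v`,
and inherits all `R`-neighbours of `v` among the elements up to `v`. Taking `R` to be "adjacent or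
equal" gives the domination maps of construction orders. Fixed points are allowed, so the root
needs no separate clause. -/
structure IsDominationMap {V : Type u} [LE V] (R : V → V → Prop) (δ : V → V) : Prop where
  apply_le (v : V) : δ v ≤ v
  rel_apply {v z : V} : z ≤ v → R v z → R (δ v) z

section DominationMap

variable {V : Type u} [LinearOrder V] {R : V → V → Prop} [Std.Symm R] {δ : V → V}

theorem IsDominationMap.exists_mem_trail_le_rel (hδ : IsDominationMap R δ) {u v v' : V}
    (huv : R u v) (hv' : v' ∈ trail δ v) (hle : v' ≤ u) :
    ∃ w ∈ trail δ v, w ≤ u ∧ R u w ∧ v' ∈ trail δ w := by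
  obtain ⟨k, rfl⟩ := hv'
  induction k generalizing v with
  | zero => exact ⟨v, self_mem_trail v, hle, huv, self_mem_trail v⟩
  | succ k ih =>
    rcases le_or_gt v u with hvu | huv_lt
    · exact ⟨v, self_mem_trail v, hvu, huv, k + 1, rfl⟩
    · have hu_parent : R u (δ v) := symm (hδ.rel_apply huv_lt.le (symm huv))
      obtain ⟨w, hw, hw_rest⟩ := ih hu_parent hle
      exact ⟨w, trail_subset_of_mem (apply_mem_trail v) hw, hw_rest⟩

theorem trail_maximal_vertex_adj_general (hδ : IsDominationMap R δ) {u v u' v' : V}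
    (huv : R u v) (hu' : u' ∈ trail δ u) (hv' : IsGreatest (trail δ v ∩ Set.Iic u') v') :
    R v' u' := by
  obtain ⟨k, rfl⟩ := hu'
  induction k generalizing u v with
  | zero =>
    obtain ⟨⟨hv'_mem, hv'_le⟩, hv'_max⟩ := hv'
    obtain ⟨w, hwv, hwu, huw, hv'w⟩ := hδ.exists_mem_trail_le_rel huv hv'_mem hv'_le
    have hv'_eq : v' = w :=
      le_antisymm (le_of_mem_trail hδ.apply_le hv'w) (hv'_max ⟨hwv, hwu⟩)
    exact hv'_eq ▸ symm huw
  | succ k ih =>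
    obtain ⟨⟨hv'_mem, hv'_le⟩, hv'_max⟩ := hv'
    have hu'_le : δ^[k + 1] u ≤ u := le_of_mem_trail hδ.apply_le ⟨k + 1, rfl⟩
    obtain ⟨w, hwv, hwu, huw, hv'w⟩ :=
      hδ.exists_mem_trail_le_rel huv hv'_mem (hv'_le.trans hu'_le)
    refine ih (hδ.rel_apply hwu huw) ⟨⟨hv'w, hv'_le⟩, ?_⟩
    exact upperBounds_mono_set (Set.inter_subset_inter_left _ (trail_subset_of_mem hwv)) hv'_max

end DominationMap

/-- The relation "adjacent or equal" of `G`, that is, membership in the closed neighbourhood. -/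
def AdjOrEq {V : Type u} (G : SimpleGraph V) (x y : V) : Prop :=
  x = y ∨ G.Adj x y

instance {V : Type u} (G : SimpleGraph V) : Std.Symm (AdjOrEq G) where
  symm _ _ := Or.imp Eq.symm SimpleGraph.Adj.symm

theorem isDominationMap_adjOrEq {V : Type u} [Preorder V] {G : SimpleGraph V} {δ : V → V}
    (hroot : ∀ v : V, ¬ (∃ u, u < v) → δ v = v)
    (hcons : ∀ v : V, (∃ u, u < v) → δ v < v ∧ DominatesOn G {z | z ≤ v} (δ v) v) :
    IsDominationMap (AdjOrEq G) δ where
  apply_le v := by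
    by_cases hv : ∃ u, u < v
    · exact (hcons v hv).1.le
    · exact (hroot v hv).le
  rel_apply {v z} hzv hvz := by
    by_cases hv : ∃ u, u < v
    · obtain ⟨-, -, hdom⟩ := hcons v hv
      exact (hdom z hzv (hvz.imp_left Eq.symm)).imp_left Eq.symm
    · rwa [hroot v hv]

theorem trail_maximal_vertex_adj {V : Type u} [Fintype V] [LinearOrder V]
    (G : SimpleGraph V) (δ : V → V)
    (hroot : ∀ v : V, ¬ (∃ u, u < v) → δ v = v)
    (hcons : ∀ v : V, (∃ u, u < v) → δ v < v ∧ DominatesOn G {z | z ≤ v} (δ v) v) :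
    ∀ u v : V, G.Adj u v → ∀ u' : V, (∃ k : ℕ, δ^[k] u = u') →
      ∀ v' : V, IsGreatest {w : V | (∃ k : ℕ, δ^[k] v = w) ∧ w ≤ u'} v' →
        v' = u' ∨ G.Adj v' u' :=
  fun _ _ huv _ hu' _ hv' =>
    trail_maximal_vertex_adj_general (isDominationMap_adjOrEq hroot hcons) (.inr huv) hu' hv'
end
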